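/- Let d ≥ 2 and α < 1. For all sufficiently small ε > 0 (depending on α) there exists c(ε) > 0 such that ℙ-almost surely, for all sufficiently large t, P₀(ℓ_t(ℋ_*(t)) ≤ 1) ≤ exp(−t^{c(ε)}), where ℋ_*(t) = {x ∈ ℤ^d : z(x) ≥ t^{1/α − ε}}. -/

import Mathlib

open MeasureTheory ProbabilityTheory Filter Set

noncomputable section

/-- `n`-step transition probabilities of the discrete-time simple random walk on `ℤ^m`. -/
def srwKernel (m : ℕ) : ℕ → (Fin m → ℤ) → (Fin m → ℤ) → ℝ
  | 0, x, y => if x = y then 1 else 0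
  | n + 1, x, y =>
      (∑ i : Fin m, (srwKernel m n (Function.update x i (x i + 1)) y
        + srwKernel m n (Function.update x i (x i - 1)) y)) / (2 * m)

/-- Transition kernel of the continuous-time simple random walk on `ℤ^m` which jumps to
each of its `2m` nearest neighbours at rate `1` (total jump rate `2m`). -/
def heatKernel (m : ℕ) (t : ℝ) (x y : Fin m → ℤ) : ℝ :=
  ∑' n : ℕ, Real.exp (-(2 * m) * t) * ((2 * m) * t) ^ n / n.factorial * srwKernel m n x y

/-- `(P, S)` is (a realization of) the continuous-time simple random walk on `ℤ^m`:
under `P x` the process `S` starts at `x`, has right-continuous (piecewise constant)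
paths, and its finite-dimensional distributions are given by the heat kernel. -/
structure IsCTSRW (m : ℕ) {Ω : Type*} [MeasurableSpace Ω]
    (P : (Fin m → ℤ) → Measure Ω) (S : ℝ → Ω → (Fin m → ℤ)) : Prop where
  prob : ∀ x, IsProbabilityMeasure (P x)
  meas : Measurable fun p : ℝ × Ω => S p.1 p.2
  start : ∀ x, ∀ᵐ ω ∂ P x, S 0 ω = x
  rightCont : ∀ x, ∀ᵐ ω ∂ P x, ∀ t : ℝ, 0 ≤ t →
    ∃ ε > (0 : ℝ), ∀ u, t ≤ u → u < t + ε → S u ω = S t ω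
  fdd : ∀ x (n : ℕ) (t : Fin (n + 1) → ℝ), 0 ≤ t 0 →
    (∀ i : Fin n, t i.castSucc ≤ t i.succ) →
    ∀ y : Fin (n + 1) → (Fin m → ℤ),
      (P x {ω | ∀ i, S (t i) ω = y i}).toReal
        = heatKernel m (t 0) x (y 0)
          * ∏ i : Fin n, heatKernel m (t i.succ - t i.castSucc) (y i.castSucc) (y i.succ)

/-- `z` is an i.i.d. nonnegative random scenery on `ℤ^d` whose common upper tail decays
like `r^{-α+o(1)}`. -/
structure IsScenery (d : ℕ) (α : ℝ) {Ω : Type*} [MeasurableSpace Ω]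
    (μ : Measure Ω) (z : (Fin d → ℤ) → Ω → ℝ) : Prop where
  prob : IsProbabilityMeasure μ
  meas : ∀ x, Measurable (z x)
  nonneg : ∀ x ω, 0 ≤ z x ω
  indep : iIndepFun z μ
  ident : ∀ x, IdentDistrib (z x) (z 0) μ μ
  tail : Tendsto (fun r : ℝ => Real.log (μ {ω | r < z 0 ω}).toReal / Real.log r)
    atTop (nhds (-α))

/-- The random walk in random scenery `A(t) = ∫₀ᵗ z(S_u) du`. -/
def rwrs {Ωz Ωw : Type*} (d : ℕ) (z : (Fin d → ℤ) → Ωz → ℝ)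
    (S : ℝ → Ωw → (Fin d → ℤ)) (t : ℝ) (ζ : Ωz) (ω : Ωw) : ℝ :=
  ∫ u in Set.Ioc (0 : ℝ) t, z (S u ω) ζ

end
open MeasureTheory ProbabilityTheory Filter Set

noncomputable section

/-- The occupation time measure `ℓ_t(B) = ∫₀ᵗ 1_{S_u ∈ B} du` of the walk. -/
def occTime (d : ℕ) {Ωw : Type*} (S : ℝ → Ωw → (Fin d → ℤ))
    (B : Set (Fin d → ℤ)) (t : ℝ) (ω : Ωw) : ℝ :=
  ∫ u in Set.Ioc (0 : ℝ) t, Set.indicator B (fun _ => (1 : ℝ)) (S u ω)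

end


namespace Stmt19

/-- Lebesgue measure on `(-π, π]`. -/
noncomputable def circ : Measure ℝ := volume.restrict (Ioc (-Real.pi) Real.pi)

instance : IsFiniteMeasure circ := by unfold circ; infer_instance

/-- the product measure on the torus. -/
noncomputable def torus (m : ℕ) : Measure (Fin m → ℝ) := Measure.pi (fun _ => circ)

instance (m : ℕ) : IsFiniteMeasure (torus m) := by unfold torus; infer_instance

/-- characteristic function of one step of the walk. -/
noncomputable def charFn (m : ℕ) (θ : Fin m → ℝ) : ℝ := (∑ i, Real.cos (θ i)) / m

lemma measurable_charFn (m : ℕ) : Measurable (charFn m) := by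
  unfold charFn; fun_prop

lemma abs_charFn_le (m : ℕ) (θ : Fin m → ℝ) : |charFn m θ| ≤ 1 := by
  unfold charFn
  rw [abs_div, Nat.abs_cast]
  apply div_le_one_of_le₀ _ (by positivity)
  calc |∑ i, Real.cos (θ i)| ≤ ∑ i, |Real.cos (θ i)| := Finset.abs_sum_le_sum_abs _ _
    _ ≤ ∑ i : Fin m, (1 : ℝ) := Finset.sum_le_sum fun i _ => Real.abs_cos_le_one _
    _ = m := by simp

lemma circ_exp (k : ℤ) : ∫ θ, Complex.exp (Complex.I * k * θ) ∂circ
    = if k = 0 then (2 * Real.pi : ℂ) else 0 := by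
  unfold circ
  rw [← intervalIntegral.integral_of_le (by linarith [Real.pi_pos])]
  split_ifs with h
  · subst h
    simp
    ring
  · rw [integral_exp_mul_complex (by simp [h])]
    have : Complex.exp (Complex.I * k * (Real.pi : ℝ))
        = Complex.exp (Complex.I * k * ((-Real.pi : ℝ) : ℂ)) := by
      rw [Complex.exp_eq_exp_iff_exists_int]
      exact ⟨k, by push_cast; ring⟩
    rw [this]; simp

lemma srw_fourier (m n : ℕ) (x y : Fin m → ℤ) :
    (srwKernel m n x y : ℂ) * (2 * Real.pi) ^ m
      = ∫ θ, (charFn m θ : ℂ) ^ n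
        * ∏ i, Complex.exp (Complex.I * ((x i - y i : ℤ) : ℂ) * θ i) ∂(torus m) := by
  induction n generalizing x with
  | zero =>
    simp only [pow_zero, one_mul]
    unfold torus
    rw [integral_fintype_prod_eq_prod
      (f := fun i θ => Complex.exp (Complex.I * ((x i - y i : ℤ) : ℂ) * (θ : ℝ)))]
    simp only [circ_exp, srwKernel]
    split_ifs with h
    · subst h; simp
    · have : ∃ i, x i ≠ y i := by
        by_contra hc; push Not at hc; exact h (funext hc)
      obtain ⟨i, hi⟩ := this
      symm
      simp only [Complex.ofReal_zero, zero_mul]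
      apply Finset.prod_eq_zero (Finset.mem_univ i)
      rw [if_neg]; omega
  | succ n ih =>
    have hIntg : ∀ x : Fin m → ℤ, Integrable (fun θ => (charFn m θ : ℂ) ^ n
        * ∏ i, Complex.exp (Complex.I * ((x i - y i : ℤ) : ℂ) * θ i)) (torus m) := by
      intro x
      apply Integrable.of_bound (C := 1)
      · have := measurable_charFn m
        apply Measurable.aestronglyMeasurable
        fun_prop
      · filter_upwards with θ
        rw [norm_mul, norm_pow, norm_prod, Complex.norm_real, Real.norm_eq_abs]
        have h1 : |charFn m θ| ^ n ≤ 1 := pow_le_one₀ (abs_nonneg _) (abs_charFn_le m θ)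
        have h2 : ∏ i, ‖Complex.exp (Complex.I * ((x i - y i : ℤ) : ℂ) * θ i)‖ = 1 := by
          apply Finset.prod_eq_one
          intro i _
          rw [show Complex.I * ((x i - y i : ℤ) : ℂ) * θ i
            = ((((x i - y i : ℤ) : ℝ) * θ i : ℝ) : ℂ) * Complex.I by push_cast; ring]
          exact Complex.norm_exp_ofReal_mul_I _
        rw [h2]; linarith
    have hupd : ∀ (i : Fin m) (e : ℤ) (θ : Fin m → ℝ),
        ∏ j, Complex.exp (Complex.I * ((Function.update x i (x i + e) j - y j : ℤ) : ℂ) * θ j)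
        = Complex.exp (Complex.I * e * θ i)
          * ∏ j, Complex.exp (Complex.I * ((x j - y j : ℤ) : ℂ) * θ j) := by
      intro i e θ
      rw [← Finset.mul_prod_erase Finset.univ _ (Finset.mem_univ i),
        ← Finset.mul_prod_erase Finset.univ
          (fun j => Complex.exp (Complex.I * ((x j - y j : ℤ) : ℂ) * θ j)) (Finset.mem_univ i),
        ← mul_assoc, ← Complex.exp_add]
      congr 1
      · rw [Function.update_self]; congr 1; push_cast; ring
      · apply Finset.prod_congr rfl
        intro j hj
        rw [Function.update_of_ne (Finset.ne_of_mem_erase hj)]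
    simp only [srwKernel]
    push_cast
    rw [div_mul_eq_mul_div, Finset.sum_mul]
    simp only [add_mul, ih]
    have : ∀ i : Fin m, (∫ θ, (charFn m θ : ℂ) ^ n
        * ∏ j, Complex.exp (Complex.I * ((Function.update x i (x i + 1) j - y j : ℤ) : ℂ) * θ j)
          ∂(torus m)) + (∫ θ, (charFn m θ : ℂ) ^ n
        * ∏ j, Complex.exp (Complex.I * ((Function.update x i (x i - 1) j - y j : ℤ) : ℂ) * θ j)
          ∂(torus m)) = ∫ θ, (charFn m θ : ℂ) ^ n * (2 * Real.cos (θ i) : ℝ)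
          * ∏ j, Complex.exp (Complex.I * ((x j - y j : ℤ) : ℂ) * θ j) ∂(torus m) := by
      intro i
      rw [← integral_add (hIntg _) (hIntg _)]
      congr 1
      ext θ
      rw [hupd i 1, sub_eq_add_neg (x i) 1, hupd i (-1)]
      push_cast
      rw [Complex.cos]
      rw [show Complex.I * (-1) * (θ i : ℂ) = -(θ i : ℂ) * Complex.I by ring,
        show Complex.I * 1 * (θ i : ℂ) = (θ i : ℂ) * Complex.I by ring]
      ring
    simp only [this]
    rw [← integral_finsetSum, ← integral_div]
    · congr 1
      ext θ
      rw [← Finset.sum_mul, ← Finset.mul_sum, pow_succ]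
      have : ∑ i, ((2 * Real.cos (θ i) : ℝ) : ℂ) = 2 * ((∑ i, Real.cos (θ i) : ℝ) : ℂ) := by
        push_cast; rw [Finset.mul_sum]
      rw [this]
      generalize (charFn m θ : ℂ) ^ n = A
      rw [charFn]
      push_cast
      by_cases hm : (m : ℂ) = 0
      · simp [hm]
      · field_simp
    · intro i _
      have h := ((hIntg (Function.update x i (x i + 1))).add (hIntg (Function.update x i (x i - 1))))
      refine h.congr ?_
      filter_upwards with θ
      simp only [Pi.add_apply]
      rw [hupd i 1, sub_eq_add_neg (x i) 1, hupd i (-1)]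
      push_cast
      rw [Complex.cos]
      rw [show Complex.I * (-1) * (θ i : ℂ) = -(θ i : ℂ) * Complex.I by ring,
        show Complex.I * 1 * (θ i : ℂ) = (θ i : ℂ) * Complex.I by ring]
      ring

lemma srw_diag (m n : ℕ) (x : Fin m → ℤ) :
    srwKernel m n x x * (2 * Real.pi) ^ m = ∫ θ, charFn m θ ^ n ∂(torus m) := by
  have h := srw_fourier m n x x
  simp only [sub_self, Int.cast_zero, mul_zero, zero_mul, Complex.exp_zero,
    Finset.prod_const_one, mul_one] at h
  have h2 : ∫ θ, (charFn m θ : ℂ) ^ n ∂(torus m) = ((∫ θ, charFn m θ ^ n ∂(torus m) : ℝ) : ℂ) := by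
    simp only [← Complex.ofReal_pow]; exact integral_ofReal
  rw [h2] at h
  exact_mod_cast h

lemma circ_gauss (t : ℝ) (ht : 0 < t) :
    ∫ θ, Real.exp (-2 * t * (1 - Real.cos θ)) ∂circ ≤ 5 / Real.sqrt t := by
  have hb : 0 < 4 * t / Real.pi ^ 2 := by positivity
  calc ∫ θ, Real.exp (-2 * t * (1 - Real.cos θ)) ∂circ
      ≤ ∫ θ, Real.exp (-(4 * t / Real.pi ^ 2) * θ ^ 2) ∂circ := by
        unfold circ
        apply setIntegral_mono_on _ (integrable_exp_neg_mul_sq hb).integrableOn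
          measurableSet_Ioc
        · intro θ hθ
          apply Real.exp_le_exp.2
          have h := Real.cos_le_one_sub_mul_cos_sq (x := θ) (abs_le.2 ⟨hθ.1.le, hθ.2⟩)
          have : 2 * t * (2 / Real.pi ^ 2 * θ ^ 2) ≤ 2 * t * (1 - Real.cos θ) := by
            apply mul_le_mul_of_nonneg_left _ (by positivity); linarith
          calc _ = - (2 * t * (1 - Real.cos θ)) := by ring
            _ ≤ - (2 * t * (2 / Real.pi ^ 2 * θ ^ 2)) := by linarith
            _ = _ := by ring
        · apply Continuous.integrableOn_Ioc; fun_prop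
    _ ≤ ∫ θ, Real.exp (-(4 * t / Real.pi ^ 2) * θ ^ 2) := by
        unfold circ
        apply setIntegral_le_integral (integrable_exp_neg_mul_sq hb)
        filter_upwards with θ; positivity
    _ = Real.sqrt (Real.pi / (4 * t / Real.pi ^ 2)) := integral_gaussian _
    _ ≤ 5 / Real.sqrt t := by
        rw [show (5 : ℝ) / Real.sqrt t = Real.sqrt (25 / t) by
          rw [Real.sqrt_div (by norm_num), show (25 : ℝ) = 5 ^ 2 by norm_num,
            Real.sqrt_sq (by norm_num)]]
        apply Real.sqrt_le_sqrt
        rw [div_div_eq_mul_div, div_le_div_iff₀ (by positivity) ht]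
        have h4 := Real.pi_le_four
        have h3 : Real.pi ^ 3 ≤ 4 ^ 3 := pow_le_pow_left₀ Real.pi_pos.le h4 3
        nlinarith

lemma heat_diag_le (m : ℕ) (hm : 2 ≤ m) (t : ℝ) (ht : 1 ≤ t) (x : Fin m → ℤ) :
    heatKernel m t x x ≤ 1 / t := by
  have ht0 : 0 < t := by linarith
  have hm0 : (m : ℝ) ≠ 0 := by positivity
  have hF : HasSum (fun n : ℕ => ∫ θ, Real.exp (-(2 * m) * t) * ((2 * m) * t) ^ n / n.factorial
      * charFn m θ ^ n ∂(torus m))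
      (∫ θ, ∑' n : ℕ, Real.exp (-(2 * m) * t) * ((2 * m) * t) ^ n / n.factorial
      * charFn m θ ^ n ∂(torus m)) := by
    have hb : ∀ (n : ℕ) θ, ‖Real.exp (-(2 * m) * t) * ((2 * m) * t) ^ n / n.factorial
      * charFn m θ ^ n‖ ≤ Real.exp (-(2 * m) * t) * ((2 * m) * t) ^ n / n.factorial := by
      intro n θ
      rw [norm_mul, norm_pow, Real.norm_eq_abs (charFn m θ)]
      have h1 : |charFn m θ| ^ n ≤ 1 := pow_le_one₀ (abs_nonneg _) (abs_charFn_le m θ)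
      have h2 : 0 ≤ Real.exp (-(2 * m) * t) * ((2 * m) * t) ^ n / n.factorial := by positivity
      rw [Real.norm_of_nonneg h2]
      exact mul_le_of_le_one_right h2 h1
    have hi : ∀ n : ℕ, Integrable (fun θ => Real.exp (-(2 * m) * t) * ((2 * m) * t) ^ n
        / n.factorial * charFn m θ ^ n) (torus m) := by
      intro n
      refine Integrable.of_bound ?_ _ (ae_of_all _ (hb n))
      have := measurable_charFn m
      apply Measurable.aestronglyMeasurable
      fun_prop
    apply hasSum_integral_of_summable_integral_norm hi
    have hs : Summable (fun n : ℕ => Real.exp (-(2 * m) * t) * ((2 * m) * t) ^ n / n.factorial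
        * (torus m).real univ) := by
      apply Summable.mul_right
      have := (Real.summable_pow_div_factorial ((2 * m) * t)).mul_left (Real.exp (-(2 * m) * t))
      refine this.congr fun n => by ring
    refine Summable.of_nonneg_of_le (fun n => integral_nonneg fun θ => norm_nonneg _) ?_ hs
    intro n
    calc _ ≤ ∫ θ, Real.exp (-(2 * m) * t) * ((2 * m) * t) ^ n / n.factorial ∂(torus m) :=
          integral_mono (hi n).norm (integrable_const _) (hb n)
      _ = _ := by rw [integral_const, smul_eq_mul, mul_comm]
  have hsum : ∀ θ : Fin m → ℝ, ∑' n : ℕ, Real.exp (-(2 * m) * t) * ((2 * m) * t) ^ n / n.factorial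
      * charFn m θ ^ n = ∏ i, Real.exp (-2 * t * (1 - Real.cos (θ i))) := by
    intro θ
    have h1 : ∀ n : ℕ, Real.exp (-(2 * m) * t) * ((2 * m) * t) ^ n / n.factorial
      * charFn m θ ^ n = Real.exp (-(2 * m) * t) * (((2 * m) * t * charFn m θ) ^ n / n.factorial) := by
      intro n; rw [mul_pow ((2 * m) * t)]; ring
    simp only [h1]
    rw [tsum_mul_left]
    have h2 := NormedSpace.expSeries_div_hasSum_exp ((2 * m) * t * charFn m θ)
    rw [← Real.exp_eq_exp_ℝ] at h2
    rw [h2.tsum_eq, ← Real.exp_add, ← Real.exp_sum]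
    congr 1
    rw [← Finset.mul_sum, Finset.sum_sub_distrib, charFn]
    simp
    field_simp
    ring
  have heq : heatKernel m t x x * (2 * Real.pi) ^ m
      = (∫ θ, Real.exp (-2 * t * (1 - Real.cos θ)) ∂circ) ^ m := by
    have h3 : (∫ θ, Real.exp (-2 * t * (1 - Real.cos θ)) ∂circ) ^ m
        = ∫ θ, ∏ i, Real.exp (-2 * t * (1 - Real.cos (θ i))) ∂(torus m) := by
      unfold torus
      rw [integral_fintype_prod_eq_pow (fun θ : ℝ => Real.exp (-2 * t * (1 - Real.cos θ)))]
      simp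
    rw [h3]
    simp only [hsum] at hF
    rw [← hF.tsum_eq, heatKernel, ← tsum_mul_right]
    apply tsum_congr
    intro n
    rw [integral_const_mul, ← srw_diag m n x]
    ring
  have hnn : 0 ≤ ∫ θ, Real.exp (-2 * t * (1 - Real.cos θ)) ∂circ :=
    integral_nonneg fun θ => (Real.exp_pos _).le
  have h4 : heatKernel m t x x * (2 * Real.pi) ^ m ≤ (5 / Real.sqrt t) ^ m := by
    rw [heq]; exact pow_le_pow_left₀ hnn (circ_gauss t ht0) m
  have h5 : heatKernel m t x x ≤ (1 / Real.sqrt t) ^ m := by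
    have hpi : (5 : ℝ) ^ m ≤ (2 * Real.pi) ^ m :=
      pow_le_pow_left₀ (by norm_num) (by linarith [Real.pi_gt_three]) m
    have h6 : (5 / Real.sqrt t) ^ m ≤ (1 / Real.sqrt t) ^ m * (2 * Real.pi) ^ m := by
      rw [div_pow, div_pow, one_pow, div_mul_eq_mul_div, one_mul]
      gcongr
    exact le_of_mul_le_mul_right (h4.trans h6) (by positivity)
  have hsq : 1 ≤ Real.sqrt t := by rw [Real.one_le_sqrt]; exact ht
  calc heatKernel m t x x ≤ (1 / Real.sqrt t) ^ m := h5
    _ ≤ (1 / Real.sqrt t) ^ 2 :=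
      pow_le_pow_of_le_one (by positivity) (div_le_one_of_le₀ hsq (by positivity)) hm
    _ = 1 / t := by rw [div_pow, one_pow, Real.sq_sqrt ht0.le]


section Walk

variable {d : ℕ} {Ω : Type*} [MeasurableSpace Ω] {P : (Fin d → ℤ) → Measure Ω}
  {S : ℝ → Ω → (Fin d → ℤ)}

lemma measurable_S (hS : IsCTSRW d P S) (t : ℝ) : Measurable (S t) :=
  hS.meas.comp (measurable_const.prodMk measurable_id)

lemma markov_singleton (hd : 2 ≤ d) (hS : IsCTSRW d P S) (s : ℝ) (hs : 0 ≤ s) (j k : ℕ) (hjk : j < k)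
    (y : Fin (j + 1) → (Fin d → ℤ)) :
    (P 0) {ω | (∀ i : Fin (j + 1), S ((i : ℕ) + s) ω = y i) ∧ S (k + s) ω = y (Fin.last j)}
      ≤ ENNReal.ofReal (1 / ((k - j : ℕ) : ℝ))
        * (P 0) {ω | ∀ i : Fin (j + 1), S ((i : ℕ) + s) ω = y i} := by
  have := hS.prob 0
  have h1 := hS.fdd 0 j (fun i => (i : ℕ) + s) (by simpa using hs) (by intro i; simp) y
  have h2 := hS.fdd 0 (j + 1) (Fin.snoc (α := fun _ => ℝ) (fun i : Fin (j + 1) => ((i : ℕ) : ℝ) + s) (k + s))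
    (by
      rw [show (0 : Fin (j + 1 + 1)) = Fin.castSucc 0 from rfl, Fin.snoc_castSucc]
      simpa using hs)
    (by
      intro i
      rw [Fin.snoc_castSucc]
      induction i using Fin.lastCases with
      | last =>
        rw [Fin.succ_last, Fin.snoc_last]
        have : (j : ℝ) ≤ k := by exact_mod_cast hjk.le
        simpa using this
      | cast i =>
        rw [Fin.succ_castSucc, Fin.snoc_castSucc]
        simp)
    (Fin.snoc (α := fun _ => (Fin d → ℤ)) y (y (Fin.last j)))
  have hset : {ω | ∀ i : Fin (j + 1 + 1), S ((Fin.snoc (α := fun _ => ℝ) (fun i : Fin (j + 1) => ((i : ℕ) : ℝ) + s) (k + s)) i) ω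
      = (Fin.snoc (α := fun _ => (Fin d → ℤ)) y (y (Fin.last j))) i}
      = {ω | (∀ i : Fin (j + 1), S ((i : ℕ) + s) ω = y i) ∧ S (k + s) ω = y (Fin.last j)} := by
    ext ω
    simp only [mem_ofPred_eq]
    rw [Fin.forall_fin_succ']
    simp only [Fin.snoc_castSucc, Fin.snoc_last]
  rw [hset, Fin.prod_univ_castSucc] at h2
  rw [show (0 : Fin (j + 1 + 1)) = Fin.castSucc 0 from rfl] at h2
  simp only [Fin.snoc_castSucc, Fin.succ_castSucc, Fin.succ_last, Fin.snoc_last,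
    ← mul_assoc] at h2
  rw [← h1] at h2
  have h3 : heatKernel d (k + s - (((Fin.last j : Fin (j + 1)) : ℕ) + s)) (y (Fin.last j)) (y (Fin.last j))
      ≤ 1 / ((k - j : ℕ) : ℝ) := by
    have : (k + s - (((Fin.last j : Fin (j + 1)) : ℕ) + s) : ℝ) = ((k - j : ℕ) : ℝ) := by
      rw [Nat.cast_sub hjk.le]; simp
    rw [this]
    apply heat_diag_le d hd
    exact_mod_cast Nat.sub_pos_of_lt hjk
  rw [← ENNReal.ofReal_toReal (measure_ne_top (P 0)
      {ω | (∀ i : Fin (j + 1), S ((i : ℕ) + s) ω = y i) ∧ S (k + s) ω = y (Fin.last j)}),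
    ← ENNReal.ofReal_toReal (measure_ne_top (P 0) {ω | ∀ i : Fin (j + 1), S ((i : ℕ) + s) ω = y i}),
    ← ENNReal.ofReal_mul (by positivity), h2]
  apply ENNReal.ofReal_le_ofReal
  rw [mul_comm]
  exact mul_le_mul_of_nonneg_right h3 ENNReal.toReal_nonneg

/-- the event `E` only depends on the skeleton at times `s, 1 + s, …, j + s`. -/
def Determined (S : ℝ → Ω → (Fin d → ℤ)) (s : ℝ) (j : ℕ) (E : Set Ω) : Prop :=
  ∀ ω ω', (∀ i ≤ j, S ((i : ℕ) + s) ω = S ((i : ℕ) + s) ω') → ω ∈ E → ω' ∈ E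

lemma markov_lt (hd : 2 ≤ d) (hS : IsCTSRW d P S) (s : ℝ) (hs : 0 ≤ s) (j k : ℕ) (hjk : j < k)
    (E : Set Ω) (hE : Determined S s j E) :
    (P 0) (E ∩ {ω | S (k + s) ω = S (j + s) ω})
      ≤ ENNReal.ofReal (1 / ((k - j : ℕ) : ℝ)) * (P 0) E := by
  let W : Ω → (Fin (j + 1) → (Fin d → ℤ)) := fun ω i => S ((i : ℕ) + s) ω
  have hW : Measurable W := measurable_pi_lambda _ fun i => measurable_S hS _
  have hEW : E = W ⁻¹' (W '' E) := by
    apply Subset.antisymm (subset_preimage_image W E)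
    rintro ω' ⟨ω, hω, hω'⟩
    refine hE ω ω' (fun i hi => ?_) hω
    exact congrFun hω' ⟨i, by omega⟩
  have hB : MeasurableSet {ω | S (k + s) ω = S (j + s) ω} :=
    measurableSet_eq_fun (measurable_S hS _) (measurable_S hS _)
  have hsing : ∀ y ∈ W '' E, MeasurableSet (W ⁻¹' {y}) := fun y _ => hW (measurableSet_singleton y)
  have hEm : MeasurableSet E := by rw [hEW]; exact hW (Set.to_countable _).measurableSet
  calc (P 0) (E ∩ {ω | S (k + s) ω = S (j + s) ω})
      = ((P 0).restrict {ω | S (k + s) ω = S (j + s) ω}) (W ⁻¹' (W '' E)) := by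
        rw [← hEW, Measure.restrict_apply hEm]
    _ = ∑' y : (W '' E), ((P 0).restrict {ω | S (k + s) ω = S (j + s) ω}) (W ⁻¹' {(y : Fin (j + 1) → (Fin d → ℤ))}) :=
        (tsum_measure_preimage_singleton (Set.to_countable _) hsing).symm
    _ ≤ ∑' y : (W '' E), ENNReal.ofReal (1 / ((k - j : ℕ) : ℝ)) * (P 0) (W ⁻¹' {(y : Fin (j + 1) → (Fin d → ℤ))}) := by
        apply ENNReal.tsum_le_tsum
        intro y
        rw [Measure.restrict_apply (hsing y y.2)]
        have := markov_singleton hd hS s hs j k hjk y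
        have e1 : W ⁻¹' {(y : Fin (j + 1) → (Fin d → ℤ))} = {ω | ∀ i : Fin (j + 1), S ((i : ℕ) + s) ω = (y : Fin (j + 1) → (Fin d → ℤ)) i} := by
          ext ω; simp only [mem_preimage, mem_singleton_iff, mem_ofPred_eq, funext_iff, W]
        rw [e1]
        refine le_trans (measure_mono ?_) this
        rintro ω ⟨h1, h2⟩
        refine ⟨h1, ?_⟩
        rw [mem_ofPred_eq] at h2
        rw [h2]
        exact h1 (Fin.last j)
    _ = ENNReal.ofReal (1 / ((k - j : ℕ) : ℝ)) * (P 0) (W ⁻¹' (W '' E)) := by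
        rw [ENNReal.tsum_mul_left, tsum_measure_preimage_singleton (Set.to_countable _) hsing]
    _ = _ := by rw [← hEW]

lemma markov_sym (hd : 2 ≤ d) (hS : IsCTSRW d P S) (s : ℝ) (hs : 0 ≤ s) (j k : ℕ)
    (E : Set Ω) (hE : Determined S s (min j k) E) :
    (P 0) (E ∩ {ω | S (j + s) ω = S (k + s) ω})
      ≤ ENNReal.ofReal (2 / (((k - j) + (j - k) + 1 : ℕ) : ℝ)) * (P 0) E := by
  have key : ∀ j k : ℕ, j < k → 1 / ((k - j : ℕ) : ℝ) ≤ 2 / (((k - j) + (j - k) + 1 : ℕ) : ℝ) := by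
    intro j k h
    have h1 : j - k = 0 := by omega
    have h2 : (1 : ℝ) ≤ ((k - j : ℕ) : ℝ) := by exact_mod_cast Nat.sub_pos_of_lt h
    rw [h1, div_le_div_iff₀ (by linarith) (by positivity)]
    push_cast
    linarith
  rcases lt_trichotomy j k with h | h | h
  · rw [min_eq_left h.le] at hE
    have h1 : {ω | S (j + s) ω = S (k + s) ω} = {ω | S (k + s) ω = S (j + s) ω} := by
      ext ω; exact eq_comm
    rw [h1]
    refine (markov_lt hd hS s hs j k h E hE).trans ?_
    gcongr ?_ * _
    exact ENNReal.ofReal_le_ofReal (key j k h)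
  · subst h
    simp only [ofPred_true, inter_univ, tsub_self, zero_add, Nat.cast_one, div_one]
    refine le_mul_of_one_le_left zero_le ?_
    rw [← ENNReal.ofReal_one]
    exact ENNReal.ofReal_le_ofReal (by norm_num)
  · rw [min_eq_right h.le] at hE
    refine (markov_lt hd hS s hs k j h E hE).trans ?_
    gcongr ?_ * _
    apply ENNReal.ofReal_le_ofReal
    rw [add_comm (k - j)]
    exact key k j h

lemma sum_dist (L a : ℕ) (ha : a < L) :
    ∑ b ∈ Finset.range L, (2 : ℝ) / (((b - a) + (a - b) + 1 : ℕ) : ℝ) ≤ 4 * (1 + Real.log L) := by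
  have h1 : ∀ b ∈ Finset.range L, (2 : ℝ) / (((b - a) + (a - b) + 1 : ℕ) : ℝ)
      ≤ ∑ r ∈ Finset.range L, (2 / ((r : ℝ) + 1))
        * ((if b = a + r then 1 else 0) + (if b = a - r then 1 else 0)) := by
    intro b hb
    rw [Finset.mem_range] at hb
    refine le_trans ?_ (Finset.single_le_sum (f := fun r : ℕ => (2 / ((r : ℝ) + 1))
        * ((if b = a + r then 1 else 0) + (if b = a - r then 1 else 0)))
        (fun r _ => by positivity) (Finset.mem_range.2 (show (b - a) + (a - b) < L by omega)))
    have h2 : (1 : ℝ) ≤ (if b = a + ((b - a) + (a - b)) then 1 else 0)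
        + (if b = a - ((b - a) + (a - b)) then 1 else 0) := by
      rcases le_total a b with h | h
      · rw [if_pos (by omega)]
        have : (0 : ℝ) ≤ (if b = a - ((b - a) + (a - b)) then 1 else 0) := by positivity
        linarith
      · rw [if_pos (show b = a - ((b - a) + (a - b)) by omega)]
        have : (0 : ℝ) ≤ (if b = a + ((b - a) + (a - b)) then 1 else 0) := by positivity
        linarith
    push_cast at h2 ⊢
    exact le_mul_of_one_le_right (by positivity) h2
  refine (Finset.sum_le_sum h1).trans ?_
  rw [Finset.sum_comm]
  have h3 : ∀ r ∈ Finset.range L, ∑ b ∈ Finset.range L, (2 / ((r : ℝ) + 1))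
        * ((if b = a + r then (1 : ℝ) else 0) + (if b = a - r then 1 else 0))
        ≤ 4 * (1 / ((r : ℝ) + 1)) := by
    intro r _
    rw [← Finset.mul_sum, Finset.sum_add_distrib, Finset.sum_ite_eq', Finset.sum_ite_eq']
    have : ((if a + r ∈ Finset.range L then (1 : ℝ) else 0) + (if a - r ∈ Finset.range L then 1 else 0)) ≤ 2 := by
      split_ifs <;> norm_num
    calc _ ≤ (2 / ((r : ℝ) + 1)) * 2 := mul_le_mul_of_nonneg_left this (by positivity)
      _ = _ := by ring
  refine (Finset.sum_le_sum h3).trans ?_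
  rw [← Finset.mul_sum]
  have := harmonic_le_one_add_log L
  rw [harmonic] at this
  push_cast at this
  simp only [one_div]
  linarith

/-- number of coincidences within the `i`-th block of length `L`. -/
noncomputable def coin (S : ℝ → Ω → (Fin d → ℤ)) (s : ℝ) (L i : ℕ) (ω : Ω) : ℕ :=
  ∑ a ∈ Finset.range L, ∑ b ∈ Finset.range L,
    if S (((i * L + a : ℕ) : ℝ) + s) ω = S (((i * L + b : ℕ) : ℝ) + s) ω then 1 else 0

lemma coin_meas (hS : IsCTSRW d P S) (s : ℝ) (L i : ℕ) : Measurable (coin S s L i) := by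
  unfold coin
  refine Finset.measurable_sum _ fun a _ => Finset.measurable_sum _ fun b _ => ?_
  exact Measurable.ite (measurableSet_eq_fun (measurable_S hS _) (measurable_S hS _))
    measurable_const measurable_const

lemma coin_block (hd : 2 ≤ d) (hS : IsCTSRW d P S) (s : ℝ) (hs : 0 ≤ s) (L i : ℕ) (hL : 1 ≤ L)
    (E : Set Ω) (hE : Determined S s (i * L) E) :
    (P 0) (E ∩ {ω | 8 * L * (1 + Real.log L) ≤ coin S s L i ω}) ≤ 2⁻¹ * (P 0) E := by
  have hlog : 0 ≤ Real.log L := Real.log_nonneg (by exact_mod_cast hL)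
  have hLr : (1 : ℝ) ≤ L := by exact_mod_cast hL
  set D : ℝ := 4 * L * (1 + Real.log L) with hD
  have hDpos : 0 < D := by positivity
  have hm : MeasurableSet {ω | 8 * L * (1 + Real.log L) ≤ (coin S s L i ω : ℝ)} :=
    measurableSet_le measurable_const (by have := coin_meas hS s L i; fun_prop)
  -- expectation bound
  have hexp : ∫⁻ ω in E, (coin S s L i ω : ENNReal) ∂(P 0) ≤ ENNReal.ofReal D * (P 0) E := by
    have hset : ∀ a b : ℕ, MeasurableSet {ω | S (((i * L + a : ℕ) : ℝ) + s) ω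
        = S (((i * L + b : ℕ) : ℝ) + s) ω} := fun a b =>
      measurableSet_eq_fun (measurable_S hS _) (measurable_S hS _)
    have h1 : ∀ ω, (coin S s L i ω : ENNReal) = ∑ a ∈ Finset.range L, ∑ b ∈ Finset.range L,
        ({ω | S (((i * L + a : ℕ) : ℝ) + s) ω = S (((i * L + b : ℕ) : ℝ) + s) ω}.indicator
          (fun _ => (1 : ENNReal)) ω) := by
      intro ω
      unfold coin
      push_cast
      simp only [Set.indicator_apply, mem_ofPred_eq]
    simp only [h1]
    have hmi : ∀ a b : ℕ, Measurable ({ω | S (((i * L + a : ℕ) : ℝ) + s) ω = S (((i * L + b : ℕ) : ℝ) + s) ω}.indicator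
          (fun _ => (1 : ENNReal))) := fun a b => measurable_const.indicator (hset a b)
    rw [lintegral_finsetSum _ (fun a _ => Finset.measurable_sum _ fun b _ => hmi a b)]
    calc _ ≤ ∑ a ∈ Finset.range L, ENNReal.ofReal (4 * (1 + Real.log L)) * (P 0) E := by
          apply Finset.sum_le_sum
          intro a ha
          rw [lintegral_finsetSum _ (fun b _ => hmi a b)]
          calc _ ≤ ∑ b ∈ Finset.range L, ENNReal.ofReal (2 / (((b - a) + (a - b) + 1 : ℕ) : ℝ)) * (P 0) E := by
                apply Finset.sum_le_sum
                intro b _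
                rw [lintegral_indicator (hset a b), setLIntegral_one,
                  Measure.restrict_apply (hset a b), inter_comm]
                have := markov_sym hd hS s hs (i * L + a) (i * L + b) E
                  (fun ω ω' h => hE ω ω' fun i' hi' => h i' (by omega))
                rwa [show i * L + b - (i * L + a) = b - a by omega,
                  show i * L + a - (i * L + b) = a - b by omega] at this
            _ = ENNReal.ofReal (∑ b ∈ Finset.range L, (2 : ℝ) / (((b - a) + (a - b) + 1 : ℕ) : ℝ)) * (P 0) E := by
                rw [ENNReal.ofReal_sum_of_nonneg (fun b _ => by positivity), Finset.sum_mul]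
            _ ≤ _ := by
                gcongr
                exact sum_dist L a (Finset.mem_range.1 ha)
      _ = ENNReal.ofReal D * (P 0) E := by
          rw [Finset.sum_const, Finset.card_range, nsmul_eq_mul, ← mul_assoc,
            ← ENNReal.ofReal_natCast, ← ENNReal.ofReal_mul (by positivity)]
          congr 2
          rw [hD]; ring
  have hmk := mul_meas_ge_le_lintegral (μ := (P 0).restrict E)
    (f := fun ω => (coin S s L i ω : ENNReal)) (by have := coin_meas hS s L i; fun_prop) (ENNReal.ofReal (2 * D))
  have hsub : E ∩ {ω | 8 * L * (1 + Real.log L) ≤ coin S s L i ω}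
      = {ω | ENNReal.ofReal (2 * D) ≤ (coin S s L i ω : ENNReal)} ∩ E := by
    rw [inter_comm]
    congr 1
    ext ω
    simp only [mem_ofPred_eq]
    rw [← ENNReal.ofReal_natCast, ENNReal.ofReal_le_ofReal_iff (by positivity)]
    rw [hD, show 2 * (4 * (L : ℝ) * (1 + Real.log L)) = 8 * L * (1 + Real.log L) by ring]
  have hm2 : MeasurableSet {ω | ENNReal.ofReal (2 * D) ≤ (coin S s L i ω : ENNReal)} :=
    measurableSet_le measurable_const (by have := coin_meas hS s L i; fun_prop)
  rw [Measure.restrict_apply hm2, ← hsub] at hmk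
  have h5 := hmk.trans hexp
  have hD0 : ENNReal.ofReal D ≠ 0 := by simpa using hDpos
  have h6 : ENNReal.ofReal (2 * D) = ENNReal.ofReal D * 2 := by
    rw [mul_comm, ENNReal.ofReal_mul hDpos.le]; norm_num
  rw [h6, mul_assoc, ENNReal.mul_le_mul_iff_right hD0 ENNReal.ofReal_ne_top] at h5
  rw [mul_comm 2⁻¹, ← div_eq_mul_inv, ENNReal.le_div_iff_mul_le (by norm_num) (by norm_num),
    mul_comm _ 2]
  exact h5

lemma coin_all (hd : 2 ≤ d) (hS : IsCTSRW d P S) (s : ℝ) (hs : 0 ≤ s) (L K : ℕ) (hL : 1 ≤ L) :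
    (P 0) {ω | ∀ i < K, 8 * L * (1 + Real.log L) ≤ coin S s L i ω} ≤ 2⁻¹ ^ K := by
  have := hS.prob 0
  induction K with
  | zero => simp
  | succ K ih =>
    have h1 : {ω | ∀ i < K + 1, 8 * L * (1 + Real.log L) ≤ (coin S s L i ω : ℝ)}
        = {ω | ∀ i < K, 8 * L * (1 + Real.log L) ≤ (coin S s L i ω : ℝ)}
          ∩ {ω | 8 * L * (1 + Real.log L) ≤ (coin S s L K ω : ℝ)} := by
      ext ω
      simp only [mem_ofPred_eq, mem_inter_iff]
      constructor
      · intro h; exact ⟨fun i hi => h i (by omega), h K (by omega)⟩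
      · rintro ⟨h, h'⟩ i hi
        rcases Nat.lt_succ_iff_lt_or_eq.1 hi with h2 | h2
        · exact h i h2
        · rw [h2]; exact h'
    rw [h1]
    refine (coin_block hd hS s hs L K hL _ ?_).trans ?_
    · intro ω ω' h hω i hi
      have := hω i hi
      have e : coin S s L i ω = coin S s L i ω' := by
        unfold coin
        refine Finset.sum_congr rfl fun a ha => Finset.sum_congr rfl fun b hb => ?_
        rw [Finset.mem_range] at ha hb
        have : (i + 1) * L ≤ K * L := Nat.mul_le_mul_right L hi
        rw [h (i * L + a) (by nlinarith), h (i * L + b) (by nlinarith)]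
      rwa [e] at this
    · rw [pow_succ, mul_comm]
      gcongr

/-- The set of sites visited by the skeleton at times `s, …, n - 1 + s`. -/
noncomputable def rng (S : ℝ → Ω → (Fin d → ℤ)) (s : ℝ) (n : ℕ) (ω : Ω) : Finset (Fin d → ℤ) :=
  (Finset.range n).image fun k => S ((k : ℕ) + s) ω

lemma sq_le_card_mul {β : Type*} [DecidableEq β] (L : ℕ) (f : ℕ → β) :
    L ^ 2 ≤ ((Finset.range L).image f).card
      * ∑ a ∈ Finset.range L, ∑ b ∈ Finset.range L, (if f a = f b then 1 else 0) := by
  have h1 := Finset.card_eq_sum_card_image f (Finset.range L)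
  have h2 := sq_sum_le_card_mul_sum_sq (s := (Finset.range L).image f)
    (f := fun b => ((Finset.range L).filter (fun a => f a = b)).card)
  rw [← h1, Finset.card_range] at h2
  refine h2.trans (le_of_eq ?_)
  simp only [Nat.cast_id]
  congr 1
  have h3 : ∀ a ∈ Finset.range L, ∑ b ∈ Finset.range L, (if f a = f b then 1 else 0)
      = ((Finset.range L).filter (fun b => f b = f a)).card := by
    intro a _
    rw [Finset.card_filter]
    refine Finset.sum_congr rfl fun b _ => ?_
    simp only [eq_comm]
  rw [Finset.sum_congr rfl h3]
  rw [← Finset.sum_fiberwise_of_maps_to (s := Finset.range L) (t := (Finset.range L).image f) (g := f)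
    (fun a ha => Finset.mem_image_of_mem f ha)]
  refine Finset.sum_congr rfl fun v _ => ?_
  rw [Finset.sum_congr rfl (g := fun _ => ((Finset.range L).filter (fun b => f b = v)).card)]
  · rw [Finset.sum_const, smul_eq_mul, sq]
  · intro a ha
    rw [(Finset.mem_filter.1 ha).2]

lemma range_tail (hd : 2 ≤ d) (hS : IsCTSRW d P S) (s : ℝ) (hs : 0 ≤ s) (L K n : ℕ) (hL : 1 ≤ L)
    (hn : K * L ≤ n) :
    (P 0) {ω | ((rng S s n ω).card : ℝ) * (8 * (1 + Real.log L)) < L} ≤ 2⁻¹ ^ K := by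
  refine le_trans (measure_mono ?_) (coin_all hd hS s hs L K hL)
  intro ω hω i hi
  rw [mem_ofPred_eq] at hω
  have h1 := sq_le_card_mul L (fun a => S (((i * L + a : ℕ) : ℝ) + s) ω)
  have h2 : ((Finset.range L).image (fun a => S (((i * L + a : ℕ) : ℝ) + s) ω)) ⊆ rng S s n ω := by
    intro v hv
    obtain ⟨a, ha, rfl⟩ := Finset.mem_image.1 hv
    rw [Finset.mem_range] at ha
    have : (i + 1) * L ≤ K * L := Nat.mul_le_mul_right L hi
    exact Finset.mem_image.2 ⟨i * L + a, Finset.mem_range.2 (by nlinarith), rfl⟩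
  have h3 := h1.trans (Nat.mul_le_mul_right _ (Finset.card_le_card h2))
  change L ^ 2 ≤ _ * coin S s L i ω at h3
  have h4 : (L : ℝ) ^ 2 ≤ (rng S s n ω).card * (coin S s L i ω : ℝ) := by exact_mod_cast h3
  by_contra hc
  push Not at hc
  have hLr : (1 : ℝ) ≤ L := by exact_mod_cast hL
  have h5 : ((rng S s n ω).card : ℝ) * (coin S s L i ω : ℝ)
      ≤ (rng S s n ω).card * (8 * L * (1 + Real.log L)) :=
    mul_le_mul_of_nonneg_left hc.le (by positivity)
  nlinarith

end Walk


/-- indicator of exceeding the level `a`. -/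
noncomputable def ind (a v : ℝ) : ℝ := if a < v then 1 else 0

lemma ind_nonneg (a v : ℝ) : 0 ≤ ind a v := by unfold ind; split_ifs <;> norm_num

lemma ind_le_one (a v : ℝ) : ind a v ≤ 1 := by unfold ind; split_ifs <;> norm_num

lemma measurable_ind (a : ℝ) : Measurable (ind a) :=
  Measurable.ite (measurableSet_lt measurable_const measurable_id) measurable_const measurable_const

section Scenery

variable {d : ℕ} {α : ℝ} {Ωz : Type*} [MeasurableSpace Ωz] {μ : Measure Ωz}
  {z : (Fin d → ℤ) → Ωz → ℝ}

lemma scenery_mgf (hz : IsScenery d α μ z) (a : ℝ) (R : Finset (Fin d → ℤ)) :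
    ∫⁻ ζ, ENNReal.ofReal (Real.exp (-∑ x ∈ R, ind a (z x ζ))) ∂μ
      ≤ ENNReal.ofReal (Real.exp (-((μ {ω | a < z 0 ω}).toReal / 2) * R.card)) := by
  have := hz.prob
  set p := (μ {ω | a < z 0 ω}).toReal with hp
  have hmeas : ∀ x, Measurable fun ζ => ind a (z x ζ) := fun x => (measurable_ind a).comp (hz.meas x)
  have hind : iIndepFun (fun x ζ => ind a (z x ζ)) μ :=
    hz.indep.comp (fun _ => ind a) (fun _ => measurable_ind a)
  have h1 := hind.mgf_sum hmeas R (t := -1)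
  have hone : ∀ x, mgf (fun ζ => ind a (z x ζ)) μ (-1) ≤ Real.exp (-(p / 2)) := by
    intro x
    have hset : MeasurableSet {ζ | a < z x ζ} := measurableSet_lt measurable_const (hz.meas x)
    have hpx : μ.real {ζ | a < z x ζ} = p := by
      rw [hp, Measure.real]
      congr 1
      exact (hz.ident x).measure_mem_eq (s := {v | a < v}) measurableSet_Ioi
    have e : ∀ ζ, Real.exp (-1 * ind a (z x ζ))
        = 1 - (1 - Real.exp (-1)) * {ζ | a < z x ζ}.indicator 1 ζ := by
      intro ζ
      by_cases h : a < z x ζ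
      · simp [ind, h]
      · simp [ind, h]
    unfold mgf
    simp only [e]
    have hi : Integrable ({ζ | a < z x ζ}.indicator (1 : Ωz → ℝ)) μ :=
      (integrable_const (1 : ℝ)).indicator hset
    rw [integral_sub (integrable_const _) (hi.const_mul _), integral_const_mul,
      integral_indicator_one hset, hpx]
    simp only [integral_const, probReal_univ, smul_eq_mul, mul_one]
    have h2 : Real.exp (-1) ≤ 1 / 2 := by
      have := Real.exp_neg_one_lt_d9; linarith
    have hp0 : 0 ≤ p := ENNReal.toReal_nonneg
    have h3 := Real.add_one_le_exp (-(p / 2))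
    nlinarith
  have h4 : ∫ ζ, Real.exp (-∑ x ∈ R, ind a (z x ζ)) ∂μ ≤ Real.exp (-(p / 2) * R.card) := by
    calc _ = mgf (∑ x ∈ R, fun ζ => ind a (z x ζ)) μ (-1) := by
          unfold mgf; simp [Finset.sum_apply]
      _ = _ := h1
      _ ≤ ∏ x ∈ R, Real.exp (-(p / 2)) := Finset.prod_le_prod (fun x _ => mgf_nonneg) fun x _ => hone x
      _ = _ := by rw [Finset.prod_const, ← Real.exp_nat_mul]; congr 1; ring
  rw [← ofReal_integral_eq_lintegral_ofReal]
  · exact ENNReal.ofReal_le_ofReal h4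
  · refine Integrable.of_bound (C := 1) ?_ ?_
    · apply Measurable.aestronglyMeasurable; fun_prop
    · filter_upwards with ζ
      rw [Real.norm_of_nonneg (Real.exp_pos _).le, Real.exp_le_one_iff]
      have : 0 ≤ ∑ x ∈ R, ind a (z x ζ) := Finset.sum_nonneg fun x _ => ind_nonneg _ _
      linarith
  · filter_upwards with ζ
    exact (Real.exp_pos _).le

lemma measurable_z (hz : IsScenery d α μ z) : Measurable fun q : (Fin d → ℤ) × Ωz => z q.1 q.2 :=
  measurable_from_prod_countable_right hz.meas

end Scenery

section Both

variable {d : ℕ} {α : ℝ} {Ωz Ωw : Type*} [MeasurableSpace Ωz] [MeasurableSpace Ωw] {μ : Measure Ωz}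
  {z : (Fin d → ℤ) → Ωz → ℝ} {P : (Fin d → ℤ) → Measure Ωw} {S : ℝ → Ωw → (Fin d → ℤ)}

/-- number of skeleton times at which the walk sits on a site of level above `a`. -/
noncomputable def cnt (z : (Fin d → ℤ) → Ωz → ℝ) (S : ℝ → Ωw → (Fin d → ℤ)) (a : ℝ) (n : ℕ)
    (ζ : Ωz) (s : ℝ) (ω : Ωw) : ℝ :=
  ∑ k ∈ Finset.range n, ind a (z (S (k + s) ω) ζ)

/-- the integrand. -/
noncomputable def Fn (z : (Fin d → ℤ) → Ωz → ℝ) (S : ℝ → Ωw → (Fin d → ℤ)) (a : ℝ) (n : ℕ)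
    (ζ : Ωz) (q : ℝ × Ωw) : ENNReal :=
  ENNReal.ofReal (Real.exp (1 - cnt z S a n ζ q.1 q.2))

/-- quenched upper bound. -/
noncomputable def gn (z : (Fin d → ℤ) → Ωz → ℝ) (P : (Fin d → ℤ) → Measure Ωw)
    (S : ℝ → Ωw → (Fin d → ℤ)) (a : ℝ) (n : ℕ) (ζ : Ωz) : ENNReal :=
  ∫⁻ q, Fn z S a n ζ q ∂((volume.restrict (Ioc (0 : ℝ) 1)).prod (P 0))

lemma measurable_cnt (hz : IsScenery d α μ z) (hS : IsCTSRW d P S) (a : ℝ) (n : ℕ) :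
    Measurable fun r : Ωz × (ℝ × Ωw) => cnt z S a n r.1 r.2.1 r.2.2 := by
  unfold cnt
  refine Finset.measurable_sum _ fun k _ => (measurable_ind a).comp ?_
  have h1 : Measurable fun r : Ωz × (ℝ × Ωw) => S (k + r.2.1) r.2.2 :=
    hS.meas.comp (f := fun r : Ωz × (ℝ × Ωw) => ((k + r.2.1 : ℝ), r.2.2)) (by fun_prop)
  exact (measurable_z hz).comp (h1.prodMk measurable_fst)

lemma measurable_Fn (hz : IsScenery d α μ z) (hS : IsCTSRW d P S) (a : ℝ) (n : ℕ) :
    Measurable fun r : Ωz × (ℝ × Ωw) => Fn z S a n r.1 r.2 := by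
  unfold Fn
  have := measurable_cnt hz hS a n
  fun_prop

lemma measurable_gn (hz : IsScenery d α μ z) (hS : IsCTSRW d P S) (a : ℝ) (n : ℕ) :
    Measurable (gn z P S a n) := by
  have := hS.prob 0
  unfold gn
  exact (measurable_Fn hz hS a n).lintegral_prod_right'

lemma annealed (hd : 2 ≤ d) (hz : IsScenery d α μ z) (hS : IsCTSRW d P S) (a : ℝ) (n L K : ℕ)
    (hL : 1 ≤ L) (hn : K * L ≤ n) :
    ∫⁻ ζ, gn z P S a n ζ ∂μ ≤ ENNReal.ofReal (Real.exp 1)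
      * (ENNReal.ofReal (Real.exp (-((μ {ω | a < z 0 ω}).toReal / 2) * (L / (8 * (1 + Real.log L)))))
        + 2⁻¹ ^ K) := by
  have := hS.prob 0
  have := hz.prob
  set p := (μ {ω | a < z 0 ω}).toReal with hp
  have hp0 : 0 ≤ p := ENNReal.toReal_nonneg
  have hc : 0 < 8 * (1 + Real.log L) := by
    have := Real.log_nonneg (show (1 : ℝ) ≤ L by exact_mod_cast hL)
    positivity
  unfold gn
  rw [lintegral_lintegral_swap (measurable_Fn hz hS a n).aemeasurable]
  -- inner bound
  have hin : ∀ q : ℝ × Ωw, ∫⁻ ζ, Fn z S a n ζ q ∂μ ≤ ENNReal.ofReal (Real.exp 1)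
      * ENNReal.ofReal (Real.exp (-(p / 2) * (rng S q.1 n q.2).card)) := by
    intro q
    calc ∫⁻ ζ, Fn z S a n ζ q ∂μ ≤ ∫⁻ ζ, ENNReal.ofReal (Real.exp 1)
          * ENNReal.ofReal (Real.exp (-∑ x ∈ rng S q.1 n q.2, ind a (z x ζ))) ∂μ := by
          apply lintegral_mono
          intro ζ
          simp only [Fn]
          rw [← ENNReal.ofReal_mul (Real.exp_pos _).le, ← Real.exp_add]
          apply ENNReal.ofReal_le_ofReal
          apply Real.exp_le_exp.2
          have : ∑ x ∈ rng S q.1 n q.2, ind a (z x ζ) ≤ cnt z S a n ζ q.1 q.2 := by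
            unfold rng cnt
            exact Finset.sum_image_le_of_nonneg (f := fun x => ind a (z x ζ)) fun _ _ => ind_nonneg _ _
          linarith
      _ = ENNReal.ofReal (Real.exp 1) * ∫⁻ ζ,
          ENNReal.ofReal (Real.exp (-∑ x ∈ rng S q.1 n q.2, ind a (z x ζ))) ∂μ :=
          lintegral_const_mul' _ _ ENNReal.ofReal_ne_top
      _ ≤ _ := by
          gcongr
          exact scenery_mgf hz a _
  have hmeas : Measurable fun q : ℝ × Ωw => ∫⁻ ζ, Fn z S a n ζ q ∂μ :=
    (measurable_Fn hz hS a n).lintegral_prod_left'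
  rw [lintegral_prod _ hmeas.aemeasurable]
  have hs : ∀ s ∈ Ioc (0 : ℝ) 1, ∫⁻ ω, ∫⁻ ζ, Fn z S a n ζ (s, ω) ∂μ ∂(P 0)
      ≤ ENNReal.ofReal (Real.exp 1)
      * (ENNReal.ofReal (Real.exp (-(p / 2) * (L / (8 * (1 + Real.log L))))) + 2⁻¹ ^ K) := by
    intro s hs
    set B : Set Ωw := {ω | ((rng S s n ω).card : ℝ) * (8 * (1 + Real.log L)) < L} with hB
    calc _ ≤ ∫⁻ ω, ENNReal.ofReal (Real.exp 1)
          * (ENNReal.ofReal (Real.exp (-(p / 2) * (L / (8 * (1 + Real.log L)))))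
            + B.indicator 1 ω) ∂(P 0) := by
          apply lintegral_mono
          intro ω
          refine (hin (s, ω)).trans ?_
          refine mul_le_mul' le_rfl ?_
          by_cases h : ω ∈ B
          · refine le_trans ?_ le_add_self
            rw [Set.indicator_of_mem h, Pi.one_apply, ← ENNReal.ofReal_one]
            apply ENNReal.ofReal_le_ofReal
            rw [Real.exp_le_one_iff]
            have : 0 ≤ p / 2 * ((rng S s n ω).card : ℝ) := by positivity
            simp only
            linarith
          · refine le_trans ?_ le_self_add
            apply ENNReal.ofReal_le_ofReal
            apply Real.exp_le_exp.2
            rw [hB, mem_ofPred_eq, not_lt, ← div_le_iff₀ hc] at h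
            have := mul_le_mul_of_nonneg_left h (show 0 ≤ p / 2 by positivity)
            simp only
            linarith
      _ = ENNReal.ofReal (Real.exp 1)
          * (ENNReal.ofReal (Real.exp (-(p / 2) * (L / (8 * (1 + Real.log L)))))
            + ∫⁻ ω, B.indicator 1 ω ∂(P 0)) := by
          rw [lintegral_const_mul' _ _ ENNReal.ofReal_ne_top, lintegral_add_left measurable_const,
            lintegral_const, measure_univ, mul_one]
      _ ≤ _ := by
          gcongr
          exact (lintegral_indicator_one_le B).trans (range_tail hd hS s hs.1.le L K n hL hn)
  refine (setLIntegral_mono' measurableSet_Ioc hs).trans ?_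
  rw [setLIntegral_const, Real.volume_Ioc]
  simp

lemma quenched (hz : IsScenery d α μ z) (hS : IsCTSRW d P S) (a b : ℝ) (n : ℕ) (t : ℝ)
    (hnt : (n : ℝ) ≤ t) (hab : b ≤ a) (ζ : Ωz) :
    (P 0) {ω | occTime d S {x | b ≤ z x ζ} t ω ≤ 1} ≤ gn z P S a n ζ := by
  have := hS.prob 0
  have hF : Measurable fun q : ℝ × Ωw => Fn z S a n ζ q :=
    (measurable_Fn hz hS a n).comp (f := fun q : ℝ × Ωw => (ζ, q)) (by fun_prop)
  unfold gn
  rw [lintegral_prod_symm' _ hF]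
  have hFm : Measurable fun ω => ∫⁻ s, Fn z S a n ζ (s, ω) ∂(volume.restrict (Ioc (0 : ℝ) 1)) :=
    hF.lintegral_prod_left'
  have hmk := meas_ge_le_lintegral_div (μ := P 0) hFm.aemeasurable one_ne_zero ENNReal.one_ne_top
  rw [div_one] at hmk
  refine le_trans (measure_mono ?_) hmk
  intro ω hω
  rw [mem_ofPred_eq] at hω ⊢
  have hSω : Measurable fun u : ℝ => S u ω := hS.meas.comp (f := fun u => (u, ω)) (by fun_prop)
  have hfm : Measurable fun u : ℝ => ind a (z (S u ω) ζ) :=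
    (measurable_ind a).comp ((measurable_of_countable (fun x => z x ζ)).comp hSω)
  have hii : ∀ c e : ℝ, IntervalIntegrable (fun u : ℝ => ind a (z (S u ω) ζ)) volume c e := by
    intro c e
    rw [intervalIntegrable_iff]
    refine Measure.integrableOn_of_bounded (M := 1) (by simp [uIoc]) hfm.aestronglyMeasurable ?_
    filter_upwards with u
    rw [Real.norm_of_nonneg (ind_nonneg _ _)]
    exact ind_le_one _ _
  have hcm : Measurable fun s : ℝ => cnt z S a n ζ s ω :=
    (measurable_cnt hz hS a n).comp (f := fun s : ℝ => (ζ, (s, ω))) (by fun_prop)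
  have hc0 : ∀ s, 0 ≤ cnt z S a n ζ s ω := fun s => Finset.sum_nonneg fun _ _ => ind_nonneg _ _
  have hcn : ∀ s, cnt z S a n ζ s ω ≤ n := by
    intro s
    calc cnt z S a n ζ s ω ≤ ∑ k ∈ Finset.range n, (1 : ℝ) :=
          Finset.sum_le_sum fun _ _ => ind_le_one _ _
      _ = n := by simp
  have hci : IntegrableOn (fun s : ℝ => cnt z S a n ζ s ω) (Ioc 0 1) := by
    refine Measure.integrableOn_of_bounded (M := n) (by simp) hcm.aestronglyMeasurable ?_
    filter_upwards with u
    rw [Real.norm_of_nonneg (hc0 _)]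
    exact hcn u
  have hei : IntegrableOn (fun s : ℝ => Real.exp (1 - cnt z S a n ζ s ω)) (Ioc 0 1) := by
    refine Measure.integrableOn_of_bounded (M := Real.exp 1) (by simp)
      (Measurable.aestronglyMeasurable (by fun_prop)) ?_
    filter_upwards with u
    rw [Real.norm_of_nonneg (Real.exp_pos _).le]
    apply Real.exp_le_exp.2
    linarith [hc0 u]
  have h1 : ∫ s in Ioc (0 : ℝ) 1, cnt z S a n ζ s ω = ∫ u in Ioc (0 : ℝ) n, ind a (z (S u ω) ζ) := by
    rw [← intervalIntegral.integral_of_le (by norm_num), ← intervalIntegral.integral_of_le (by positivity)]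
    unfold cnt
    have h3 := intervalIntegral.sum_integral_adjacent_intervals
      (f := fun u : ℝ => ind a (z (S u ω) ζ)) (μ := volume) (a := fun k : ℕ => (k : ℝ)) (n := n)
      (fun k _ => hii _ _)
    rw [Nat.cast_zero] at h3
    rw [← h3, intervalIntegral.integral_finsetSum]
    · refine Finset.sum_congr rfl fun k _ => ?_
      have := intervalIntegral.integral_comp_add_right (a := 0) (b := 1)
        (fun u : ℝ => ind a (z (S u ω) ζ)) (k : ℝ)
      simp only [add_comm _ (k : ℝ), add_zero] at this
      rw [this]; push_cast; rfl
    · intro k _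
      have := (hii (0 + k) (1 + k)).comp_add_right (k : ℝ)
      simpa [add_comm] using this
  have h2 : ∫ u in Ioc (0 : ℝ) n, ind a (z (S u ω) ζ) ≤ 1 := by
    refine le_trans ?_ hω
    unfold occTime
    have hle : ∀ u, ind a (z (S u ω) ζ) ≤ Set.indicator {x | b ≤ z x ζ} (fun _ => (1 : ℝ)) (S u ω) := by
      intro u
      unfold ind
      split_ifs with h
      · rw [Set.indicator_of_mem]
        exact hab.trans h.le
      · exact Set.indicator_nonneg (fun _ _ => zero_le_one) _
    have hoi : IntegrableOn (fun u => Set.indicator {x | b ≤ z x ζ} (fun _ => (1 : ℝ)) (S u ω)) (Ioc 0 t) := by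
      refine Measure.integrableOn_of_bounded (M := 1) (by simp)
        (Measurable.aestronglyMeasurable
          ((measurable_of_countable (Set.indicator {x | b ≤ z x ζ} (fun _ => (1 : ℝ)))).comp hSω)) ?_
      filter_upwards with u
      rw [Real.norm_of_nonneg (Set.indicator_nonneg (fun _ _ => zero_le_one) _)]
      exact Set.indicator_le_self' (fun _ _ => zero_le_one) _
    calc _ ≤ ∫ u in Ioc (0 : ℝ) n, Set.indicator {x | b ≤ z x ζ} (fun _ => (1 : ℝ)) (S u ω) := by
          apply integral_mono _ _ hle
          · exact ((intervalIntegrable_iff_integrableOn_Ioc_of_le (by positivity)).1 (hii 0 n))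
          · exact hoi.mono_set (Ioc_subset_Ioc_right hnt)
      _ ≤ _ := by
          apply setIntegral_mono_set hoi
          · filter_upwards with u
            exact Set.indicator_nonneg (fun _ _ => zero_le_one) _
          · exact (Ioc_subset_Ioc_right hnt).eventuallyLE
  have h3 : (1 : ℝ) ≤ ∫ s in Ioc (0 : ℝ) 1, Real.exp (1 - cnt z S a n ζ s ω) := by
    calc (1 : ℝ) ≤ ∫ s in Ioc (0 : ℝ) 1, (2 - cnt z S a n ζ s ω) := by
          rw [integral_sub (integrable_const _) hci, h1]
          simp
          linarith
      _ ≤ _ := by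
          apply integral_mono ((integrable_const _).sub hci) hei
          intro s
          have := Real.add_one_le_exp (1 - cnt z S a n ζ s ω)
          change 2 - cnt z S a n ζ s ω ≤ Real.exp (1 - cnt z S a n ζ s ω)
          linarith
  unfold Fn
  rw [← ofReal_integral_eq_lintegral_ofReal hei (ae_of_all _ fun s => (Real.exp_pos _).le),
    ← ENNReal.ofReal_one]
  exact ENNReal.ofReal_le_ofReal h3

end Both


lemma tail_lower {d : ℕ} {α : ℝ} {Ωz : Type*} [MeasurableSpace Ωz] {μ : Measure Ωz}
    {z : (Fin d → ℤ) → Ωz → ℝ} (hα : 0 < α) (hz : IsScenery d α μ z) (δ : ℝ) (hδ : 0 < δ) :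
    ∀ᶠ r : ℝ in atTop, r ^ (-(α + δ)) ≤ (μ {ω | r < z 0 ω}).toReal := by
  have h1 := hz.tail.eventually (Ioo_mem_nhds (show -(α + δ) < -α by linarith)
    (show -α < 0 by linarith))
  filter_upwards [h1, eventually_gt_atTop (1 : ℝ)] with r hr hr1
  have hlog : 0 < Real.log r := Real.log_pos hr1
  have hp0 : 0 ≤ (μ {ω | r < z 0 ω}).toReal := ENNReal.toReal_nonneg
  have hp : 0 < (μ {ω | r < z 0 ω}).toReal := by
    rcases hp0.lt_or_eq with h | h
    · exact h
    · exfalso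
      have := hr.2
      rw [← h] at this
      simp at this
  have h2 := hr.1
  rw [lt_div_iff₀ hlog] at h2
  rw [Real.rpow_def_of_pos (by linarith), ← Real.le_log_iff_exp_le hp]
  linarith

lemma asymp (κ : ℝ) (hκ : 0 < κ) (hκ1 : κ < 1 / 8) :
    ∀ᶠ n : ℕ in atTop, ∃ K L : ℕ, 1 ≤ L ∧ K * L ≤ n ∧ (n : ℝ) ^ κ ≤ K ∧
      (n : ℝ) ^ κ ≤ ((n : ℝ) + 1) ^ (-(1 - 4 * κ)) * (L / (8 * (1 + Real.log L))) := by
  have hcast : Tendsto (fun n : ℕ => (n : ℝ)) atTop atTop := tendsto_natCast_atTop_atTop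
  have e1 : ∀ᶠ x : ℝ in atTop, 4 ≤ x ^ (1 - κ) :=
    (tendsto_rpow_atTop (by linarith)).eventually_ge_atTop 4
  have e2 : ∀ᶠ x : ℝ in atTop, 1 ≤ x ^ κ := (tendsto_rpow_atTop hκ).eventually_ge_atTop 1
  have e3 : ∀ᶠ x : ℝ in atTop, 64 * (1 + Real.log x) ≤ x ^ (2 * κ) := by
    have h1 := (isLittleO_log_rpow_atTop (show 0 < 2 * κ by linarith)).bound
      (show (0 : ℝ) < 1 / 128 by norm_num)
    have h2 : ∀ᶠ x : ℝ in atTop, 128 ≤ x ^ (2 * κ) :=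
      (tendsto_rpow_atTop (by linarith)).eventually_ge_atTop 128
    filter_upwards [h1, h2, eventually_ge_atTop (1 : ℝ)] with x h1 h2 h3
    rw [Real.norm_of_nonneg (Real.log_nonneg h3), Real.norm_of_nonneg (by linarith)] at h1
    linarith
  filter_upwards [hcast.eventually e1, hcast.eventually e2, hcast.eventually e3,
    eventually_ge_atTop 1] with n h1 h2 h3 hn
  have hn1 : (1 : ℝ) ≤ n := by exact_mod_cast hn
  have hn0 : (0 : ℝ) < n := by linarith
  set A := (n : ℝ) ^ (1 - κ) with hA
  set B := (n : ℝ) ^ κ with hB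
  have hAB : A * B = n := by
    rw [hA, hB, ← Real.rpow_add hn0]; simp
  have hLle : ((⌊A / 2⌋₊ : ℕ) : ℝ) ≤ A / 2 := Nat.floor_le (by linarith)
  have hLge : A / 4 ≤ ((⌊A / 2⌋₊ : ℕ) : ℝ) := by
    have := Nat.lt_floor_add_one (A / 2)
    linarith
  have hL1 : 1 ≤ ⌊A / 2⌋₊ := by
    rw [Nat.one_le_floor_iff]; linarith
  have hKle : ((⌈B⌉₊ : ℕ) : ℝ) ≤ 2 * B := by
    have := Nat.ceil_lt_add_one (show 0 ≤ B by linarith)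
    linarith
  refine ⟨⌈B⌉₊, ⌊A / 2⌋₊, hL1, ?_, Nat.le_ceil B, ?_⟩
  · have : ((⌈B⌉₊ * ⌊A / 2⌋₊ : ℕ) : ℝ) ≤ (n : ℕ) := by
      push_cast
      calc _ ≤ (2 * B) * (A / 2) := mul_le_mul hKle hLle (by positivity) (by linarith)
        _ = n := by rw [← hAB]; ring
    exact_mod_cast this
  · set L := ⌊A / 2⌋₊ with hL
    have hLn : (L : ℝ) ≤ n := by nlinarith
    have hlogL : 0 ≤ Real.log L := Real.log_nonneg (by exact_mod_cast hL1)
    have hlog : Real.log L ≤ Real.log n := Real.log_le_log (by exact_mod_cast hL1) hLn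
    have hp : (n : ℝ) ^ (-(1 - 4 * κ)) / 2 ≤ ((n : ℝ) + 1) ^ (-(1 - 4 * κ)) := by
      calc (n : ℝ) ^ (-(1 - 4 * κ)) / 2 ≤ (2 * n : ℝ) ^ (-(1 - 4 * κ)) := by
            rw [Real.mul_rpow (by norm_num) hn0.le]
            have : (2 : ℝ) ^ (-1 : ℝ) ≤ 2 ^ (-(1 - 4 * κ)) :=
              Real.rpow_le_rpow_of_exponent_le (by norm_num) (by linarith)
            rw [Real.rpow_neg_one] at this
            have h5 : 0 ≤ (n : ℝ) ^ (-(1 - 4 * κ)) := by positivity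
            nlinarith
        _ ≤ _ := Real.rpow_le_rpow_of_nonpos (by positivity) (by linarith) (by linarith)
    have hq : A / 4 / (8 * (1 + Real.log n)) ≤ L / (8 * (1 + Real.log L)) := by
      gcongr
    have hD : 0 < 1 + Real.log n := by linarith
    calc B ≤ (n : ℝ) ^ (-(1 - 4 * κ)) / 2 * (A / 4 / (8 * (1 + Real.log n))) := by
          rw [show (n : ℝ) ^ (-(1 - 4 * κ)) / 2 * (A / 4 / (8 * (1 + Real.log n)))
            = ((n : ℝ) ^ (-(1 - 4 * κ)) * A) / (64 * (1 + Real.log n)) by field_simp; ring]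
          rw [le_div_iff₀ (by positivity), hA, ← Real.rpow_add hn0,
            show -(1 - 4 * κ) + (1 - κ) = κ + 2 * κ by ring, Real.rpow_add hn0]
          exact mul_le_mul_of_nonneg_left h3 (by linarith)
      _ ≤ _ := mul_le_mul hp hq (by positivity) (by positivity)

lemma summ_aux (κ : ℝ) (hκ : 0 < κ) :
    ∀ᶠ n : ℕ in atTop, 6 * Real.exp (-((n : ℝ) ^ κ / 2)) * Real.exp ((n : ℝ) ^ (κ / 2))
      ≤ 1 / (n : ℝ) ^ 2 := by
  have hcast : Tendsto (fun n : ℕ => (n : ℝ)) atTop atTop := tendsto_natCast_atTop_atTop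
  have e1 : ∀ᶠ x : ℝ in atTop, 8 ≤ x ^ (κ / 2) :=
    (tendsto_rpow_atTop (by linarith)).eventually_ge_atTop 8
  have e2 : ∀ᶠ x : ℝ in atTop, Real.log x ≤ x ^ (κ / 2) / 2 := by
    have h1 := (isLittleO_log_rpow_atTop (show 0 < κ / 2 by linarith)).bound
      (show (0 : ℝ) < 1 / 2 by norm_num)
    filter_upwards [h1, eventually_ge_atTop (1 : ℝ)] with x h1 h3
    rw [Real.norm_of_nonneg (Real.log_nonneg h3), Real.norm_of_nonneg (by positivity)] at h1
    linarith
  filter_upwards [hcast.eventually e1, hcast.eventually e2,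
    eventually_ge_atTop 1] with n h1 h2 hn
  have hn0 : (0 : ℝ) < n := by exact_mod_cast hn
  have hsq : (n : ℝ) ^ κ = (n : ℝ) ^ (κ / 2) * (n : ℝ) ^ (κ / 2) := by
    rw [← Real.rpow_add hn0]; congr 1; ring
  set X := (n : ℝ) ^ (κ / 2) with hX
  have h6 : (6 : ℝ) ≤ Real.exp 5 := by have := Real.add_one_le_exp (5 : ℝ); linarith
  have h7 : 1 / (n : ℝ) ^ 2 = Real.exp (-(2 * Real.log n)) := by
    rw [Real.exp_neg, two_mul, Real.exp_add, Real.exp_log hn0, one_div, sq]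
  rw [h7]
  calc _ ≤ Real.exp 5 * Real.exp (-((n : ℝ) ^ κ / 2)) * Real.exp X := by gcongr
    _ = Real.exp (5 + -((n : ℝ) ^ κ / 2) + X) := by rw [Real.exp_add, Real.exp_add]
    _ ≤ _ := by
        apply Real.exp_le_exp.2
        rw [hsq]
        nlinarith

end Stmt19

/-- Proposition (occupation time of the relevant level set, `d ≥ 2`, `α < 1`): for all
sufficiently small `ε > 0` there is `c(ε) > 0` such that ℙ-a.s., for all large `t`,
`P₀(ℓ_t(ℋ_*(t)) ≤ 1) ≤ exp(−t^{c(ε)})`, where `ℋ_*(t) = {x ∈ ℤ^d : z(x) ≥ t^{1/α−ε}}`. -/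
theorem stmt19 (d : ℕ) (hd : 2 ≤ d) (α : ℝ) (hα₀ : 0 < α) (hα : α < 1)
    {Ωz Ωw : Type*} [MeasurableSpace Ωz] [MeasurableSpace Ωw]
    (μ : Measure Ωz) (z : (Fin d → ℤ) → Ωz → ℝ) (hz : IsScenery d α μ z)
    (P : (Fin d → ℤ) → Measure Ωw) (S : ℝ → Ωw → (Fin d → ℤ)) (hS : IsCTSRW d P S) :
    ∃ ε₀ > (0 : ℝ), ∀ ε : ℝ, 0 < ε → ε < ε₀ → ∃ c > (0 : ℝ), ∀ᵐ ζ ∂ μ,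
      ∀ᶠ t in (atTop : Filter ℝ),
        ((P 0) {ω | occTime d S {x | t ^ (1 / α - ε) ≤ z x ζ} t ω ≤ 1}).toReal
          ≤ Real.exp (-(t ^ c)) := by
  refine ⟨1 / α, by positivity, ?_⟩
  intro ε hε hε1
  have hεα : ε * α < 1 := by rwa [lt_div_iff₀ hα₀] at hε1
  have hεα0 : 0 < ε * α := by positivity
  set κ : ℝ := ε * α / 8 with hκdef
  have hκ : 0 < κ := by positivity
  have hκ1 : κ < 1 / 8 := by rw [hκdef]; linarith
  refine ⟨κ / 4, by positivity, ?_⟩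
  have := hz.prob
  have := hS.prob 0
  set a : ℝ := 1 / α - ε with ha
  have ha0 : 0 < a := by rw [ha]; linarith
  -- the levels
  let lev : ℕ → ℝ := fun n => ((n : ℝ) + 1) ^ a
  have hlev : Tendsto lev atTop atTop := by
    refine (tendsto_rpow_atTop ha0).comp ?_
    exact tendsto_atTop_add_const_right _ _ tendsto_natCast_atTop_atTop
  have htail := hlev.eventually (Stmt19.tail_lower hα₀ hz (ε * α ^ 2 / 2) (by positivity))
  have hE : ∀ᶠ n : ℕ in atTop, ∫⁻ ζ, Stmt19.gn z P S (lev n) n ζ ∂μ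
      ≤ ENNReal.ofReal (6 * Real.exp (-((n : ℝ) ^ κ / 2))) := by
    filter_upwards [htail, Stmt19.asymp κ hκ hκ1] with n hn hn2
    obtain ⟨K, L, hL, hKL, hK, hpm⟩ := hn2
    refine (Stmt19.annealed hd hz hS (lev n) n L K hL hKL).trans ?_
    set p := (μ {ω | lev n < z 0 ω}).toReal with hp
    have hm0 : 0 ≤ (L : ℝ) / (8 * (1 + Real.log L)) := by
      have := Real.log_nonneg (show (1 : ℝ) ≤ L by exact_mod_cast hL)
      positivity
    have hp2 : ((n : ℝ) + 1) ^ (-(1 - 4 * κ)) ≤ p := by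
      refine le_trans ?_ hn
      rw [← Real.rpow_mul (by positivity)]
      apply Real.rpow_le_rpow_of_exponent_le (by linarith [Nat.cast_nonneg (α := ℝ) n])
      have e1 : a * (α + ε * α ^ 2 / 2) = 1 - ε * α / 2 - ε ^ 2 * α ^ 2 / 2 := by
        rw [ha]; field_simp; ring
      have e2 : 0 ≤ ε ^ 2 * α ^ 2 / 2 := by positivity
      rw [mul_neg, e1, hκdef]
      linarith
    have h1 : Real.exp (-(p / 2) * (L / (8 * (1 + Real.log L)))) ≤ Real.exp (-((n : ℝ) ^ κ / 2)) := by
      apply Real.exp_le_exp.2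
      have := hpm.trans (mul_le_mul_of_nonneg_right hp2 hm0)
      linarith
    have h2 : (2⁻¹ : ENNReal) ^ K ≤ ENNReal.ofReal (Real.exp (-((n : ℝ) ^ κ / 2))) := by
      have e1 : (2⁻¹ : ENNReal) ≤ ENNReal.ofReal (Real.exp (-(1 / 2))) := by
        rw [show (2⁻¹ : ENNReal) = ENNReal.ofReal (2⁻¹) by
          rw [ENNReal.ofReal_inv_of_pos (by norm_num)]; norm_num]
        apply ENNReal.ofReal_le_ofReal
        have := Real.add_one_le_exp (-(1 / 2 : ℝ))
        linarith
      calc (2⁻¹ : ENNReal) ^ K ≤ (ENNReal.ofReal (Real.exp (-(1 / 2)))) ^ K := pow_le_pow_left' e1 K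
        _ = ENNReal.ofReal (Real.exp (-(K / 2))) := by
            rw [← ENNReal.ofReal_pow (Real.exp_pos _).le, ← Real.exp_nat_mul]
            congr 2; ring
        _ ≤ _ := by
            apply ENNReal.ofReal_le_ofReal
            apply Real.exp_le_exp.2
            linarith
    calc _ ≤ ENNReal.ofReal 3 * (ENNReal.ofReal (Real.exp (-((n : ℝ) ^ κ / 2)))
          + ENNReal.ofReal (Real.exp (-((n : ℝ) ^ κ / 2)))) := by
          refine mul_le_mul' ?_ (add_le_add (ENNReal.ofReal_le_ofReal h1) h2)
          apply ENNReal.ofReal_le_ofReal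
          linarith [Real.exp_one_lt_d9]
      _ = _ := by
          rw [← ENNReal.ofReal_add (Real.exp_pos _).le (Real.exp_pos _).le,
            ← ENNReal.ofReal_mul (by norm_num)]
          congr 1; ring
  obtain ⟨N, hN⟩ := eventually_atTop.1 (hE.and ((Stmt19.summ_aux κ hκ).and (eventually_ge_atTop 1)))
  -- Borel-Cantelli
  have hBC : ∀ᵐ ζ ∂μ, ∀ᶠ n : ℕ in atTop, ζ ∉ {ζ | ENNReal.ofReal (Real.exp (-(((n + N : ℕ) : ℝ) ^ (κ / 2))))
      ≤ Stmt19.gn z P S (lev (n + N)) (n + N) ζ} := by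
    apply ae_eventually_notMem
    have hb : ∀ n : ℕ, μ {ζ | ENNReal.ofReal (Real.exp (-(((n + N : ℕ) : ℝ) ^ (κ / 2))))
      ≤ Stmt19.gn z P S (lev (n + N)) (n + N) ζ} ≤ ENNReal.ofReal (1 / ((n + N : ℕ) : ℝ) ^ 2) := by
      intro n
      obtain ⟨h1, h2, h3⟩ := hN (n + N) (by omega)
      refine (meas_ge_le_lintegral_div (Stmt19.measurable_gn hz hS _ _).aemeasurable
        (by simpa using Real.exp_pos _) ENNReal.ofReal_ne_top).trans ?_
      refine (ENNReal.div_le_div_right h1 _).trans ?_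
      rw [← ENNReal.ofReal_div_of_pos (Real.exp_pos _)]
      apply ENNReal.ofReal_le_ofReal
      refine le_trans (le_of_eq ?_) h2
      rw [Real.exp_neg (((n + N : ℕ) : ℝ) ^ (κ / 2)), div_inv_eq_mul]
    refine ne_top_of_le_ne_top ?_ (ENNReal.tsum_le_tsum hb)
    have hs : Summable fun n : ℕ => 1 / ((n + N : ℕ) : ℝ) ^ 2 :=
      (summable_nat_add_iff (f := fun n : ℕ => 1 / (n : ℝ) ^ 2) N).2
        (Real.summable_one_div_nat_pow.2 (by norm_num))
    exact hs.tsum_ofReal_ne_top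
  filter_upwards [hBC] with ζ hζ
  have hζ2 : ∀ᶠ n : ℕ in atTop, Stmt19.gn z P S (lev n) n ζ
      ≤ ENNReal.ofReal (Real.exp (-((n : ℝ) ^ (κ / 2)))) := by
    obtain ⟨M, hM⟩ := eventually_atTop.1 hζ
    filter_upwards [eventually_ge_atTop (M + N)] with n hn
    have h := hM (n - N) (by omega)
    rw [Nat.sub_add_cancel (by omega), not_le] at h
    exact h.le
  have hfl : Tendsto (fun t : ℝ => ⌊t⌋₊) atTop atTop := tendsto_nat_floor_atTop
  filter_upwards [hfl.eventually hζ2, eventually_ge_atTop (4 : ℝ)] with t ht ht4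
  have hfl1 : ((⌊t⌋₊ : ℕ) : ℝ) ≤ t := Nat.floor_le (by linarith)
  have hfl2 : t < (⌊t⌋₊ : ℕ) + 1 := Nat.lt_floor_add_one t
  have hq := Stmt19.quenched hz hS (lev ⌊t⌋₊) (t ^ a) ⌊t⌋₊ t hfl1
    (Real.rpow_le_rpow (by linarith) hfl2.le ha0.le) ζ
  have hfin := hq.trans ht
  refine (ENNReal.toReal_le_of_le_ofReal (Real.exp_pos _).le hfin).trans ?_
  apply Real.exp_le_exp.2
  apply neg_le_neg
  have hsqrt : Real.sqrt t ≤ (⌊t⌋₊ : ℕ) := by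
    have h1 : Real.sqrt t ≤ t - 1 := by
      rw [Real.sqrt_le_left (by linarith)]
      nlinarith
    linarith
  calc t ^ (κ / 4) = (Real.sqrt t) ^ (κ / 2) := by
        rw [Real.sqrt_eq_rpow, ← Real.rpow_mul (by linarith)]; congr 1; ring
    _ ≤ _ := Real.rpow_le_rpow (Real.sqrt_nonneg _) hsqrt (by positivity)
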